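/- Let 𝕁 = ℕ × (ℕ ∪ {ω}) be the Johnstone poset, ordered by (j, k) ≤ (m, n) iff (j = m and k ≤ n) or (n = ω and k ≤ m). Then: (a) there is no poset Q such that the sobrification P_H(irr_c(Σ 𝕁)) of the Scott space Σ 𝕁 is homeomorphic to Σ Q; (b) there is no poset Q such that Σ Q is well-filtered and there exists a continuous map μ : Σ 𝕁 → Σ Q making ⟨Σ Q, μ⟩ a well-filtered reflection of Σ 𝕁, i.e. such that for every continuous map f from Σ 𝕁 to a well-filtered space Y there is a unique continuous f* : Σ Q → Y with f* ∘ μ = f. In other words, neither the sobrification nor the well-filtered reflection of the Johnstone space is a Scott space. -/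

import Mathlib

universe u v

open Set

/-- The specialization order on a topological space: `specLE x y` iff `x ∈ closure {y}`. -/
def specLE {X : Type*} [TopologicalSpace X] (x y : X) : Prop :=
  x ∈ closure ({y} : Set X)

/-- `a` is an upper bound of `D` with respect to the specialization order. -/
def specUB {X : Type*} [TopologicalSpace X] (D : Set X) (a : X) : Prop :=
  ∀ d ∈ D, specLE d a

/-- `a` is a least upper bound of `D` with respect to the specialization order. -/
def specLUB {X : Type*} [TopologicalSpace X] (D : Set X) (a : X) : Prop :=
  specUB D a ∧ ∀ b, specUB D b → specLE a b

/-- `U` is Scott open with respect to the specialization order. -/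
def ScottOpenSpec {X : Type*} [TopologicalSpace X] (U : Set X) : Prop :=
  (∀ x y, specLE x y → x ∈ U → y ∈ U) ∧
  ∀ D : Set X, D.Nonempty → DirectedOn specLE D → ∀ a, specLUB D a → a ∈ U →
    (D ∩ U).Nonempty

/-- A d-space (monotone convergence space): a T0 space which is a dcpo in its
specialization order and in which every open set is Scott open with respect to
the specialization order. -/
def DSpace (X : Type*) [TopologicalSpace X] : Prop :=
  T0Space X ∧
  (∀ D : Set X, D.Nonempty → DirectedOn specLE D → ∃ a, specLUB D a) ∧
  (∀ U : Set X, IsOpen U → ScottOpenSpec U)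

/-- A set is saturated if it is an intersection of open sets. -/
def Saturated {X : Type*} [TopologicalSpace X] (A : Set X) : Prop :=
  ∃ 𝒰 : Set (Set X), (∀ U ∈ 𝒰, IsOpen U) ∧ A = ⋂₀ 𝒰

/-- A T0 space is well-filtered if every filtered (under reverse inclusion) family of
nonempty compact saturated sets whose intersection is contained in an open set `U`
has a member contained in `U`. -/
def WellFiltered (X : Type*) [TopologicalSpace X] : Prop :=
  T0Space X ∧
  ∀ 𝒦 : Set (Set X), 𝒦.Nonempty →
    (∀ K ∈ 𝒦, K.Nonempty ∧ IsCompact K ∧ Saturated K) →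
    DirectedOn (fun A B => B ⊆ A) 𝒦 →
    ∀ U : Set X, IsOpen U → ⋂₀ 𝒦 ⊆ U → ∃ K ∈ 𝒦, K ⊆ U

/-- A nonempty closed set which is irreducible. -/
def IrredClosed {X : Type*} [TopologicalSpace X] (A : Set X) : Prop :=
  A.Nonempty ∧ IsClosed A ∧
  ∀ F₁ F₂ : Set X, IsClosed F₁ → IsClosed F₂ → A ⊆ F₁ ∪ F₂ → (A ⊆ F₁ ∨ A ⊆ F₂)

/-- A space is sober if every irreducible closed set is the closure of a unique point. -/
def Sober (X : Type*) [TopologicalSpace X] : Prop :=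
  ∀ A : Set X, IrredClosed A → ∃! x : X, A = closure ({x} : Set X)

/-- The specialization preorder on a topological space. -/
def specPreorder (Y : Type*) [TopologicalSpace Y] : Preorder Y where
  le := specLE
  le_refl x := subset_closure rfl
  le_trans x y z hxy hyz :=
    closure_minimal (Set.singleton_subset_iff.mpr hyz) isClosed_closure hxy

/-- A Scott open subset of a poset: an upper set inaccessible by suprema of directed sets. -/
def IsScottOpen {P : Type*} [Preorder P] (U : Set P) : Prop :=
  IsUpperSet U ∧
  ∀ D : Set P, D.Nonempty → DirectedOn (· ≤ ·) D → ∀ a, IsLUB D a → a ∈ U →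
    (D ∩ U).Nonempty

/-- The Scott topology on a poset. `Σ P` is `P` equipped with `scottTop P`. -/
def scottTop (P : Type*) [Preorder P] : TopologicalSpace P where
  IsOpen := IsScottOpen
  isOpen_univ := by
    refine ⟨isUpperSet_univ, fun D hD _ _ _ _ => ?_⟩
    obtain ⟨d, hd⟩ := hD
    exact ⟨d, hd, trivial⟩
  isOpen_inter := by
    rintro U V ⟨hU1, hU2⟩ ⟨hV1, hV2⟩
    refine ⟨hU1.inter hV1, ?_⟩
    rintro D hne hdir a ha ⟨haU, haV⟩
    obtain ⟨d1, hd1D, hd1U⟩ := hU2 D hne hdir a ha haU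
    obtain ⟨d2, hd2D, hd2V⟩ := hV2 D hne hdir a ha haV
    obtain ⟨d3, hd3D, h13, h23⟩ := hdir d1 hd1D d2 hd2D
    exact ⟨d3, hd3D, hU1 h13 hd1U, hV1 h23 hd2V⟩
  isOpen_sUnion := by
    intro S hS
    refine ⟨isUpperSet_sUnion fun s hs => (hS s hs).1, ?_⟩
    rintro D hne hdir a ha ⟨U, hUS, haU⟩
    obtain ⟨d, hdD, hdU⟩ := (hS U hUS).2 D hne hdir a ha haU
    exact ⟨d, hdD, U, hUS, hdU⟩

/-- A dcpo: every nonempty directed subset has a least upper bound. -/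
def IsDcpo (P : Type*) [Preorder P] : Prop :=
  ∀ D : Set P, D.Nonempty → DirectedOn (· ≤ ·) D → ∃ a, IsLUB D a

/-- The way-below relation. -/
def wayBelow {P : Type*} [Preorder P] (x y : P) : Prop :=
  ∀ D : Set P, D.Nonempty → DirectedOn (· ≤ ·) D → ∀ a, IsLUB D a → y ≤ a →
    ∃ d ∈ D, x ≤ d

/-- A poset is Noetherian if every (nonempty) directed subset has a greatest member. -/
def Noetherian (P : Type*) [Preorder P] : Prop :=
  ∀ D : Set P, D.Nonempty → DirectedOn (· ≤ ·) D → ∃ m ∈ D, ∀ d ∈ D, d ≤ m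

/-- An ideal: a (nonempty) directed lower set. -/
def IsIdealSet {P : Type*} [Preorder P] (I : Set P) : Prop :=
  I.Nonempty ∧ DirectedOn (· ≤ ·) I ∧ IsLowerSet I

/-- The Alexandroff topology on a poset: the open sets are the upper sets. -/
def alexTop (P : Type*) [Preorder P] : TopologicalSpace P where
  IsOpen := IsUpperSet
  isOpen_univ := isUpperSet_univ
  isOpen_inter _ _ := IsUpperSet.inter
  isOpen_sUnion _ h := isUpperSet_sUnion h

/-- The space `X_⊤` obtained from `X` by adjoining a new top point `⊤` (here `none`):
the closed sets are the closed sets of `X` together with the whole space. -/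
def topTop (X : Type*) [TopologicalSpace X] : TopologicalSpace (Option X) where
  IsOpen V := V = ∅ ∨ ∃ U : Set X, IsOpen U ∧ V = insert none (some '' U)
  isOpen_univ := by
    refine Or.inr ⟨Set.univ, isOpen_univ, ?_⟩
    ext (_ | a) <;> simp
  isOpen_inter := by
    rintro V W (rfl | ⟨U₁, hU₁, rfl⟩) hW
    · exact Or.inl (by simp)
    rcases hW with rfl | ⟨U₂, hU₂, rfl⟩
    · exact Or.inl (by simp)
    · refine Or.inr ⟨U₁ ∩ U₂, hU₁.inter hU₂, ?_⟩
      ext (_ | a) <;> simp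
  isOpen_sUnion := by
    classical
    intro S hS
    by_cases h0 : ⋃₀ S = ∅
    · exact Or.inl h0
    · refine Or.inr ⟨{x : X | some x ∈ ⋃₀ S}, ?_, ?_⟩
      · have h1 : {x : X | some x ∈ ⋃₀ S} = ⋃ V ∈ S, some ⁻¹' V := by
          ext x; simp [Set.mem_sUnion]
        rw [h1]
        refine isOpen_biUnion fun V hV => ?_
        rcases hS V hV with rfl | ⟨U, hU, rfl⟩
        · rw [Set.preimage_empty]; exact isOpen_empty
        · have h2 : (some ⁻¹' (insert none (some '' U)) : Set X) = U := by
            ext x; simp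
          rw [h2]; exact hU
      · have hnone : (none : Option X) ∈ ⋃₀ S := by
          obtain ⟨v, V, hVS, hvV⟩ := Set.nonempty_iff_ne_empty.mpr h0
          rcases hS V hVS with rfl | ⟨U, hU, rfl⟩
          · exact absurd hvV (by simp)
          · exact ⟨_, hVS, by simp⟩
        ext (_ | a)
        · simp only [Set.mem_insert_iff, true_or, iff_true]
          exact hnone
        · simp [Set.mem_sUnion]

/-- A `𝐊`-set of a space `X` (relative to a class `K` of spaces): a set whose image
under any continuous map to a `𝐊`-space has the closure of a unique point as closure. -/
def IsKSet (K : (Y : Type u) → TopologicalSpace Y → Prop)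
    (X : Type u) [tX : TopologicalSpace X] (A : Set X) : Prop :=
  ∀ (Y : Type u) (tY : TopologicalSpace Y), K Y tY →
    ∀ f : X → Y, @Continuous X Y tX tY f →
      ∃! y : Y, @closure Y tY (f '' A) = @closure Y tY {y}

/-- `𝐊(X)`: the collection of closed `𝐊`-sets of `X`. -/
def KSets (K : (Y : Type u) → TopologicalSpace Y → Prop)
    (X : Type u) [TopologicalSpace X] : Set (Set X) :=
  {A : Set X | IsClosed A ∧ IsKSet K X A}

/-- The lower Vietoris topology on a family `G` of subsets of `X`, generated by the
sets `◊U = {A ∈ G | A ∩ U ≠ ∅}` for `U` open. -/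
def lowerVietoris {X : Type*} [TopologicalSpace X] (G : Set (Set X)) :
    TopologicalSpace ↥G :=
  TopologicalSpace.generateFrom
    {S : Set ↥G | ∃ U : Set X, IsOpen U ∧ S = {A : ↥G | ((A : Set X) ∩ U).Nonempty}}

/-- A class `K` of spaces is adequate if `P_H(𝐊(X))` is a `𝐊`-space for every T0 space `X`. -/
def Adequate (K : (Y : Type u) → TopologicalSpace Y → Prop) : Prop :=
  ∀ (X : Type u) (tX : TopologicalSpace X), @T0Space X tX →
    K ↥(@KSets K X tX) (@lowerVietoris X tX (@KSets K X tX))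

/-- `⟨Z, η⟩` is a `𝐊`-reflection of `X`. -/
def IsKReflection (K : (Y : Type u) → TopologicalSpace Y → Prop)
    (X : Type u) (tX : TopologicalSpace X)
    (Z : Type u) (tZ : TopologicalSpace Z) (η : X → Z) : Prop :=
  K Z tZ ∧ @Continuous X Z tX tZ η ∧
  ∀ (Y : Type u) (tY : TopologicalSpace Y), K Y tY →
    ∀ f : X → Y, @Continuous X Y tX tY f →
      ∃! g : Z → Y, @Continuous Z Y tZ tY g ∧ g ∘ η = f

/-- The carrier of the Johnstone poset `𝕁 = ℕ × (ℕ ∪ {ω})`. -/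
structure Johnstone where
  fst : ℕ
  snd : WithTop ℕ

/-- The Johnstone order: `(j, k) ≤ (m, n)` iff `j = m` and `k ≤ n`, or `n = ω` and `k ≤ m`. -/
instance : PartialOrder Johnstone where
  le p q := (p.fst = q.fst ∧ p.snd ≤ q.snd) ∨ (q.snd = ⊤ ∧ p.snd ≤ (q.fst : WithTop ℕ))
  le_refl p := Or.inl ⟨rfl, le_rfl⟩
  le_trans p q r hpq hqr := by
    rcases hpq with ⟨h1, h2⟩ | ⟨h1, h2⟩ <;> rcases hqr with ⟨h3, h4⟩ | ⟨h3, h4⟩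
    · exact Or.inl ⟨h1.trans h3, h2.trans h4⟩
    · exact Or.inr ⟨h3, h2.trans h4⟩
    · have hr : r.snd = ⊤ := top_le_iff.mp (h1 ▸ h4)
      exact Or.inr ⟨hr, h3 ▸ h2⟩
    · rw [h1] at h4
      exact absurd h4 (by simp)
  le_antisymm p q hpq hqp := by
    obtain ⟨pf, ps⟩ := p
    obtain ⟨qf, qs⟩ := q
    rcases hpq with ⟨h1, h2⟩ | ⟨h1, h2⟩ <;> rcases hqp with ⟨h3, h4⟩ | ⟨h3, h4⟩
    · dsimp at *
      cases h1
      cases le_antisymm h2 h4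
      rfl
    · dsimp at *
      rw [h3] at h2
      rw [top_le_iff.mp h2] at h4
      exact absurd h4 (by simp)
    · dsimp at *
      rw [h1] at h4
      rw [top_le_iff.mp h4] at h2
      exact absurd h2 (by simp)
    · dsimp at *
      rw [h3] at h2
      exact absurd h2 (by simp)

/-- The class of d-spaces. -/
def dClass : (Y : Type u) → TopologicalSpace Y → Prop := fun Y tY => @DSpace Y tY

/-- The class of well-filtered spaces. -/
def wfClass : (Y : Type u) → TopologicalSpace Y → Prop := fun Y tY => @WellFiltered Y tY

/-- The class of sober spaces. -/
def soberClass : (Y : Type u) → TopologicalSpace Y → Prop := fun Y tY => @Sober Y tY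

/-!
The sequence `(0, ω), (1, ω), …` converges to every point of `𝕁`. Hence `𝕁` is an irreducible
closed set without a generic point. It is the only one: a proper closed set contains only finitely
many `(n, ω)`, and a maximal element of finite height can be removed from a closed set, so every
other irreducible closed set is the closure of a point. The sobrification is therefore `𝕁` with a
new top element adjoined. As `𝕁` is a dcpo, this top element is not a directed supremum of other
points, so it would be isolated in a Scott topology; but `𝕁` is dense in its sobrification.

If a sequence in a subset `B` of a well-filtered space converges to every point of `B`, then the
closure of `B` has a generic point, because the saturations of the tails of the sequence form a
filtered family. So every continuous map from `𝕁` to a well-filtered space extends to the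
sobrification, which is thus also the well-filtered reflection.
-/

section Irreducible

variable {X : Type*} [TopologicalSpace X] {A : Set X} {x : X}

theorem irredClosed_iff : IrredClosed A ↔ IsIrreducible A ∧ IsClosed A := by
  rw [IrredClosed, IsIrreducible, isPreirreducible_iff_isClosed_union_isClosed]
  tauto

theorem irredClosed_closure_singleton (x : X) : IrredClosed (closure {x}) :=
  irredClosed_iff.2 ⟨isIrreducible_singleton.closure, isClosed_closure⟩

theorem IrredClosed.eq_closure_singleton (hA : IrredClosed A) (hx : x ∈ A)
    (hAx : IsClosed (A \ {x})) : A = closure {x} := by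
  have hsub : closure {x} ⊆ A := closure_minimal (singleton_subset_iff.2 hx) hA.2.1
  have hcover : A ⊆ closure {x} ∪ A \ {x} := fun y hy =>
    (em (y = x)).imp (fun h => subset_closure h) fun h => ⟨hy, h⟩
  rcases hA.2.2 _ _ isClosed_closure hAx hcover with h | h
  · exact h.antisymm hsub
  · exact absurd rfl (h hx).2

theorem IrredClosed.exists_eq_closure_singleton (hA : IrredClosed A) {F : Set X} (hF : F.Finite)
    (hFA : F ⊆ A) (hcover : A ⊆ ⋃ x ∈ F, closure {x}) : ∃ x, A = closure {x} := by
  classical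
  have hmem : ∃ Z ∈ hF.toFinset.image fun x => closure {x}, A ⊆ Z := by
    refine isIrreducible_iff_sUnion_isClosed.1 (irredClosed_iff.1 hA).1 _ ?_ ?_
    · simp
    · simpa using hcover
  obtain ⟨Z, hZ, hAZ⟩ := hmem
  obtain ⟨x, hx, rfl⟩ := Finset.mem_image.1 hZ
  have hxA : x ∈ A := hFA (hF.mem_toFinset.1 hx)
  exact ⟨x, hAZ.antisymm (closure_minimal (singleton_subset_iff.2 hxA) hA.2.1)⟩

end Irreducible

section WellFiltered

open Filter Topology

variable {X Y : Type*} [TopologicalSpace X] [TopologicalSpace Y]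

theorem saturated_nhdsKer (s : Set X) : Saturated (nhdsKer s) :=
  ⟨_, fun _ hU => hU.1, nhdsKer_def s⟩

theorem Saturated.mem_of_specializes {s : Set X} (hs : Saturated s) {x y : X} (h : x ⤳ y)
    (hy : y ∈ s) : x ∈ s := by
  obtain ⟨𝒰, hopen, rfl⟩ := hs
  exact fun U hU => h.mem_open (hopen U hU) (hy U hU)

theorem exists_minimal_isClosed_inter_nonempty {𝒦 : Set (Set X)} (hK : ∀ K ∈ 𝒦, IsCompact K)
    {C : Set X} (hC : IsClosed C) (hKC : ∀ K ∈ 𝒦, (K ∩ C).Nonempty) :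
    ∃ A ⊆ C, Minimal (fun A => IsClosed A ∧ ∀ K ∈ 𝒦, (K ∩ A).Nonempty) A := by
  refine zorn_superset_nonempty {A | IsClosed A ∧ ∀ K ∈ 𝒦, (K ∩ A).Nonempty}
    (fun c hc hchain hne => ⟨⋂₀ c, ⟨isClosed_sInter fun A hA => (hc hA).1, fun K hKm => ?_⟩,
      fun A hA => sInter_subset_of_mem hA⟩) C ⟨hC, hKC⟩
  have : Nonempty c := hne.to_subtype
  rw [sInter_eq_iInter]
  by_contra hempty
  have hdir : Directed (· ⊇ ·) fun A : c => (A : Set X) := fun A B =>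
    (hchain.total A.2 B.2).elim (fun h => ⟨A, subset_rfl, h⟩) fun h => ⟨B, h, subset_rfl⟩
  obtain ⟨A, hA⟩ := (hK K hKm).elim_directed_family_closed _ (fun A => (hc A.2).1)
    (not_nonempty_iff_eq_empty.1 hempty) hdir
  exact ((hc A.2).2 K hKm).ne_empty hA

theorem isIrreducible_of_minimal {𝒦 : Set (Set X)} (hne : 𝒦.Nonempty)
    (hdir : DirectedOn (fun K L => L ⊆ K) 𝒦) {A : Set X}
    (hA : Minimal (fun A => IsClosed A ∧ ∀ K ∈ 𝒦, (K ∩ A).Nonempty) A) : IsIrreducible A := by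
  have hmiss : ∀ F, IsClosed F → ¬ A ⊆ F → ∃ K ∈ 𝒦, ¬ (K ∩ (A ∩ F)).Nonempty := by
    intro F hF hAF
    by_contra! hmeet
    exact hAF ((hA.le_of_le ⟨hA.prop.1.inter hF, hmeet⟩ inter_subset_left).trans
      inter_subset_right)
  obtain ⟨K, hK⟩ := hne
  refine ⟨(hA.prop.2 K hK).mono inter_subset_right,
    isPreirreducible_iff_isClosed_union_isClosed.2 fun F₁ F₂ hF₁ hF₂ hcover => ?_⟩
  by_contra! hnot
  obtain ⟨K₁, hK₁, hmiss₁⟩ := hmiss F₁ hF₁ hnot.1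
  obtain ⟨K₂, hK₂, hmiss₂⟩ := hmiss F₂ hF₂ hnot.2
  obtain ⟨L, hL, hLK₁, hLK₂⟩ := hdir K₁ hK₁ K₂ hK₂
  obtain ⟨x, hxL, hxA⟩ := hA.prop.2 L hL
  rcases hcover hxA with hx | hx
  · exact hmiss₁ ⟨x, hLK₁ hxL, hxA, hx⟩
  · exact hmiss₂ ⟨x, hLK₂ hxL, hxA, hx⟩

theorem wellFiltered_of_quasiSober [T0Space X] [QuasiSober X] : WellFiltered X := by
  refine ⟨‹_›, fun 𝒦 hne hK hdir U hU hKU => ?_⟩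
  by_contra! hnot
  have hmeet : ∀ K ∈ 𝒦, (K ∩ Uᶜ).Nonempty := fun K hKm => inter_compl_nonempty_iff.2 (hnot K hKm)
  obtain ⟨A, hAU, hA⟩ :=
    exists_minimal_isClosed_inter_nonempty (fun K hKm => (hK K hKm).2.1) hU.isClosed_compl hmeet
  obtain ⟨x, hx⟩ := QuasiSober.sober (isIrreducible_of_minimal hne hdir hA) hA.prop.1
  refine hAU hx.mem (hKU fun K hKm => ?_)
  obtain ⟨y, hyK, hyA⟩ := hA.prop.2 K hKm
  exact (hK K hKm).2.2.mem_of_specializes (hx.specializes hyA) hyK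

theorem WellFiltered.exists_isGenericPoint_closure (hX : WellFiltered X) {B : Set X} {u : ℕ → X}
    (huB : ∀ n, u n ∈ B) (hu : ∀ b ∈ B, Tendsto u atTop (𝓝 b)) :
    ∃ x, IsGenericPoint x (closure B) := by
  let tail (n : ℕ) : Set X := range fun m => u (m + n)
  have mem_tail (n : ℕ) : u n ∈ tail n := ⟨0, congrArg u (zero_add n)⟩
  have tail_anti : Antitone tail := fun a b hab => by
    rintro _ ⟨m, rfl⟩
    exact ⟨m + (b - a), congrArg u (by omega)⟩
  have tail_compact (n : ℕ) : IsCompact (tail n) := by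
    have h := ((tendsto_add_atTop_iff_nat n).2 (hu _ (huB n))).isCompact_insert_range
    rwa [insert_eq_of_mem (mem_tail n)] at h
  have hmeet : (⋂₀ range (fun n => nhdsKer (tail n)) ∩ closure B).Nonempty := by
    by_contra hempty
    obtain ⟨_, ⟨n, rfl⟩, hn⟩ := hX.2 (range fun n => nhdsKer (tail n)) (range_nonempty _)
      (forall_mem_range.2 fun n => ⟨⟨u n, subset_nhdsKer (mem_tail n)⟩,
        IsCompact.nhdsKer_iff.2 (tail_compact n), saturated_nhdsKer _⟩)
      (directedOn_range.2 (Antitone.directed_ge fun a b hab => nhdsKer_mono (tail_anti hab)))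
      (closure B)ᶜ isClosed_closure.isOpen_compl
      (disjoint_iff_inter_eq_empty.2 (not_nonempty_iff_eq_empty.1 hempty)).subset_compl_right
    exact hn (subset_nhdsKer (mem_tail n)) (subset_closure (huB n))
  obtain ⟨x, hx, hxB⟩ := hmeet
  refine ⟨x, (closure_minimal (singleton_subset_iff.2 hxB) isClosed_closure).antisymm
    (closure_minimal (fun b hb => mem_closure_iff.2 fun V hV hbV => ?_) isClosed_closure)⟩
  obtain ⟨n, hn⟩ := eventually_atTop.1 ((hu b hb).eventually (hV.mem_nhds hbV))
  have htail : tail n ⊆ V := range_subset_iff.2 fun m => hn _ (Nat.le_add_left n m)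
  exact ⟨x, nhdsKer_minimal htail hV (hx _ ⟨n, rfl⟩), rfl⟩

end WellFiltered

section KSet

open Filter Topology

variable {X : Type u} [TopologicalSpace X] {K : (Y : Type u) → TopologicalSpace Y → Prop}

theorem isKSet_of_exists_isGenericPoint (hK : ∀ (Y : Type u) tY, K Y tY → @T0Space Y tY)
    {A : Set X} (hA : ∀ (Y : Type u) [tY : TopologicalSpace Y], K Y tY → ∀ f : X → Y,
      Continuous f → ∃ y, IsGenericPoint y (closure (f '' A))) : IsKSet K X A := by
  intro Y tY hY f hf
  have := hK Y tY hY
  obtain ⟨y, hy⟩ := hA Y hY f hf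
  exact ⟨y, hy.symm, fun z hz => IsGenericPoint.eq hz.symm hy⟩

theorem isKSet_closure_singleton (hK : ∀ (Y : Type u) tY, K Y tY → @T0Space Y tY) (x : X) :
    IsKSet K X (closure {x}) :=
  isKSet_of_exists_isGenericPoint hK fun _ _ _ f hf => ⟨f x, isGenericPoint_closure.image hf⟩

theorem isKSet_wfClass_of_tendsto {A : Set X} {u : ℕ → X} (huA : ∀ n, u n ∈ A)
    (hu : ∀ a ∈ A, Tendsto u atTop (𝓝 a)) : IsKSet wfClass X A :=
  isKSet_of_exists_isGenericPoint (fun _ _ hY => hY.1) fun _ _ hY f hf =>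
    hY.exists_isGenericPoint_closure (fun n => mem_image_of_mem f (huA n))
      (forall_mem_image.2 fun a ha => (hf.tendsto a).comp (hu a ha))

theorem IsKReflection.nonempty_homeomorph {Z Z' : Type u} [TopologicalSpace Z]
    [TopologicalSpace Z'] {η : X → Z} {η' : X → Z'} (h : IsKReflection K X ‹_› Z ‹_› η)
    (h' : IsKReflection K X ‹_› Z' ‹_› η') : Nonempty (Z ≃ₜ Z') := by
  obtain ⟨hZ, hη, lift⟩ := h
  obtain ⟨hZ', hη', lift'⟩ := h'
  obtain ⟨f, ⟨hf, hfη⟩, -⟩ := lift Z' _ hZ' η' hη'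
  obtain ⟨g, ⟨hg, hgη'⟩, -⟩ := lift' Z _ hZ η hη
  have hgf : g ∘ f = id := (lift Z _ hZ η hη).unique
    ⟨hg.comp hf, by rw [Function.comp_assoc, hfη, hgη']⟩ ⟨continuous_id, rfl⟩
  have hfg : f ∘ g = id := (lift' Z' _ hZ' η' hη').unique
    ⟨hf.comp hg, by rw [Function.comp_assoc, hgη', hfη]⟩ ⟨continuous_id, rfl⟩
  exact ⟨⟨⟨f, g, congrFun hgf, congrFun hfg⟩, hf, hg⟩⟩

end KSet

/-- The sobrification `P_H(irr_c(X))` of a space `X`. Its order as a subtype of `Set X`, namely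
inclusion, is the specialization order in the convention `A ∈ closure {B}`. -/
abbrev Sobrification (X : Type u) [TopologicalSpace X] : Type u :=
  {A : Set X | IrredClosed A}

namespace Sobrification

variable {X : Type u} [TopologicalSpace X]

instance : TopologicalSpace (Sobrification X) :=
  lowerVietoris _

/-- The canonical map `x ↦ closure {x}` from a space to its sobrification. -/
def of (x : X) : Sobrification X :=
  ⟨closure {x}, irredClosed_closure_singleton x⟩

theorem isOpen_setOf_inter_nonempty {U : Set X} (hU : IsOpen U) :
    IsOpen {A : Sobrification X | ((A : Set X) ∩ U).Nonempty} :=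
  TopologicalSpace.isOpen_generateFrom_of_mem ⟨U, hU, rfl⟩

theorem of_inter_nonempty_iff {U : Set X} (hU : IsOpen U) {x : X} :
    ((of x : Set X) ∩ U).Nonempty ↔ x ∈ U :=
  (isGenericPoint_closure.mem_open_set_iff hU).symm

theorem continuous_of : Continuous (of : X → Sobrification X) := by
  refine continuous_generateFrom_iff.2 ?_
  rintro _ ⟨U, hU, rfl⟩
  convert hU using 1
  exact ext fun x => of_inter_nonempty_iff hU

theorem mem_iff_of_isOpen {W : Set (Sobrification X)} (hW : IsOpen W) {A : Sobrification X} :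
    A ∈ W ↔ ((A : Set X) ∩ of ⁻¹' W).Nonempty := by
  induction hW with
  | basic _ hs =>
    obtain ⟨U, hU, rfl⟩ := hs
    have hpre : of ⁻¹' {A : Sobrification X | ((A : Set X) ∩ U).Nonempty} = U :=
      ext fun x => of_inter_nonempty_iff hU
    rw [hpre, mem_ofPred_eq]
  | univ => simpa using A.2.1
  | inter s t hs ht ihs iht =>
    rw [mem_inter_iff, ihs, iht]
    refine ⟨fun h => ?_, fun h => ⟨h.mono ?_, h.mono ?_⟩⟩
    · exact (irredClosed_iff.1 A.2).1.2 _ _ (continuous_of.isOpen_preimage s hs)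
        (continuous_of.isOpen_preimage t ht) h.1 h.2
    · exact inter_subset_inter_right _ inter_subset_left
    · exact inter_subset_inter_right _ inter_subset_right
  | sUnion S _ ih =>
    constructor
    · rintro ⟨s, hs, hA⟩
      exact ((ih s hs).1 hA).mono
        (inter_subset_inter_right _ (preimage_mono (subset_sUnion_of_mem hs)))
    · rintro ⟨x, hxA, s, hs, hx⟩
      exact ⟨s, hs, (ih s hs).2 ⟨x, hxA, hx⟩⟩

theorem mem_iff_of_isClosed {W : Set (Sobrification X)} (hW : IsClosed W) {A : Sobrification X} :
    A ∈ W ↔ (A : Set X) ⊆ of ⁻¹' W := by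
  rw [← not_iff_not, ← mem_compl_iff, mem_iff_of_isOpen hW.isOpen_compl, preimage_compl,
    inter_compl_nonempty_iff]

theorem denseRange_of : DenseRange (of : X → Sobrification X) := fun _ =>
  (mem_iff_of_isClosed isClosed_closure).2 fun x _ => subset_closure (mem_range_self x)

theorem closure_singleton (A : Sobrification X) : closure {A} = Iic A := by
  have hIic : Iic A = {B : Sobrification X | ((B : Set X) ∩ (A : Set X)ᶜ).Nonempty}ᶜ := by
    ext B
    rw [mem_compl_iff, mem_ofPred_eq, inter_compl_nonempty_iff, not_not]
    rfl
  refine (closure_minimal (singleton_subset_iff.2 self_mem_Iic) ?_).antisymm fun B hB => ?_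
  · rw [hIic]
    exact (isOpen_setOf_inter_nonempty A.2.2.1.isOpen_compl).isClosed_compl
  · have hA : (A : Set X) ⊆ of ⁻¹' closure {A} :=
      (mem_iff_of_isClosed isClosed_closure).1 (subset_closure rfl)
    exact (mem_iff_of_isClosed isClosed_closure).2 (Subset.trans hB hA)

instance [IrreducibleSpace X] : OrderTop (Sobrification X) where
  top := ⟨univ, irredClosed_iff.2 ⟨IrreducibleSpace.isIrreducible_univ X, isClosed_univ⟩⟩
  le_top A := subset_univ (A : Set X)

instance : T0Space (Sobrification X) where
  t0 A B h := by
    rw [inseparable_iff_closure_eq, closure_singleton, closure_singleton] at h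
    exact Iic_injective h

theorem irredClosed_preimage_of {W : Set (Sobrification X)} (hW : IsIrreducible W)
    (hWc : IsClosed W) : IrredClosed (of ⁻¹' W) := by
  have hsub : ∀ A ∈ W, (A : Set X) ⊆ of ⁻¹' W := fun A => (mem_iff_of_isClosed hWc).1
  have hmeet : ∀ U : Set X, IsOpen U → (of ⁻¹' W ∩ U).Nonempty →
      (W ∩ {A : Sobrification X | ((A : Set X) ∩ U).Nonempty}).Nonempty :=
    fun U hU ⟨x, hxW, hxU⟩ => ⟨of x, hxW, (of_inter_nonempty_iff hU).2 hxU⟩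
  refine irredClosed_iff.2 ⟨⟨?_, fun U V hU hV hWU hWV => ?_⟩, hWc.preimage continuous_of⟩
  · obtain ⟨A, hA⟩ := hW.nonempty
    exact A.2.1.mono (hsub A hA)
  · obtain ⟨A, hAW, hAU, hAV⟩ := hW.2 _ _ (isOpen_setOf_inter_nonempty hU)
      (isOpen_setOf_inter_nonempty hV) (hmeet U hU hWU) (hmeet V hV hWV)
    exact ((irredClosed_iff.1 A.2).1.2 U V hU hV hAU hAV).mono
      (inter_subset_inter_left _ (hsub A hAW))

instance : QuasiSober (Sobrification X) where
  sober hW hWc := by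
    refine ⟨⟨_, irredClosed_preimage_of hW hWc⟩, (closure_singleton _).trans ?_⟩
    exact ext fun A => (mem_iff_of_isClosed hWc).symm

theorem continuous_ext {Y : Type*} [TopologicalSpace Y] [T0Space Y] {g₁ g₂ : Sobrification X → Y}
    (hg₁ : Continuous g₁) (hg₂ : Continuous g₂) (h : g₁ ∘ of = g₂ ∘ of) : g₁ = g₂ := by
  refine funext fun A => (inseparable_iff_forall_isOpen.2 fun V hV => ?_).eq
  change A ∈ g₁ ⁻¹' V ↔ A ∈ g₂ ⁻¹' V
  rw [mem_iff_of_isOpen (hV.preimage hg₁), mem_iff_of_isOpen (hV.preimage hg₂),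
    ← preimage_comp, ← preimage_comp, h]

theorem exists_continuous_comp_of_eq {Y : Type*} [TopologicalSpace Y] [T0Space Y] {f : X → Y}
    (hf : Continuous f)
    (hgen : ∀ A : Sobrification X, ∃ y, IsGenericPoint y (closure (f '' (A : Set X)))) :
    ∃ g : Sobrification X → Y, Continuous g ∧ g ∘ of = f := by
  choose g hg using hgen
  have hmem : ∀ (A : Sobrification X) (V : Set Y), IsOpen V →
      (g A ∈ V ↔ ((A : Set X) ∩ f ⁻¹' V).Nonempty) := by
    intro A V hV
    rw [(hg A).mem_open_set_iff hV, closure_inter_open_nonempty_iff hV, ← image_inter_preimage,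
      image_nonempty]
  refine ⟨g, continuous_def.2 fun V hV => ?_, funext fun x => ?_⟩
  · rw [show g ⁻¹' V = {A : Sobrification X | ((A : Set X) ∩ f ⁻¹' V).Nonempty} from
      Set.ext fun A => hmem A V hV]
    exact isOpen_setOf_inter_nonempty (hV.preimage hf)
  · exact (inseparable_iff_forall_isOpen.2 fun V hV =>
      (hmem (of x) V hV).trans (of_inter_nonempty_iff (hV.preimage hf))).eq

theorem isKReflection_of {K : (Y : Type u) → TopologicalSpace Y → Prop}
    (hK : ∀ (Y : Type u) tY, K Y tY → @T0Space Y tY)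
    (hmem : K (Sobrification X) inferInstance)
    (hset : ∀ A : Set X, IrredClosed A → IsKSet K X A) :
    IsKReflection K X inferInstance (Sobrification X) inferInstance of := by
  refine ⟨hmem, continuous_of, fun Y tY hY f hf => ?_⟩
  have := hK Y tY hY
  obtain ⟨g, hg, hgf⟩ := exists_continuous_comp_of_eq hf fun A =>
    (hset A A.2 Y tY hY f hf).exists.imp fun _ h => h.symm
  exact ⟨g, ⟨hg, hgf⟩, fun g' hg' => continuous_ext hg'.1 hg (hg'.2.trans hgf.symm)⟩

end Sobrification

section Scott

open Topology

variable {P Q : Type*} [Preorder P] [TopologicalSpace P]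

theorem isScott_scottTop (P : Type*) [Preorder P] : @IsScott P univ _ (scottTop P) := by
  refine @IsScott.mk P univ _ (scottTop P) (TopologicalSpace.ext (funext fun U => propext ?_))
  let := scott P univ
  have : IsScott P univ := ⟨rfl⟩
  exact ((IsScott.isOpen_iff_isUpperSet_and_dirSupInaccOn (D := univ)).trans
    (and_congr_right' dirSupInaccOn_univ)).symm

theorem continuous_orderIso [IsScott P univ] [Preorder Q] [TopologicalSpace Q] [IsScott Q univ]
    (e : P ≃o Q) : Continuous e := by
  have he : ScottContinuous e := fun _ _ _ _ ha => e.isLUB_image'.2 ha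
  exact (IsScott.scottContinuousOn_iff_continuous fun _ _ _ => mem_univ _).1 he.scottContinuousOn

theorem isScott_of_homeomorph (hP : ∀ x : P, closure {x} = Iic x) [Preorder Q]
    [TopologicalSpace Q] [IsScott Q univ] (h : P ≃ₜ Q) : IsScott P univ := by
  have hle : ∀ x y : P, h x ≤ h y ↔ x ≤ y := by
    intro x y
    rw [← mem_Iic, ← IsScott.closure_singleton, ← specializes_iff_mem_closure,
      h.isInducing.specializes_iff, specializes_iff_mem_closure, hP, mem_Iic]
  let e : WithScott P ≃o Q := ⟨WithScott.ofScott.trans h.toEquiv, hle _ _⟩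
  let h' : WithScott P ≃ₜ Q :=
    ⟨e.toEquiv, continuous_orderIso e, continuous_orderIso e.symm⟩
  have hind : IsInducing (WithScott.toScott : P → WithScott P) := by
    convert (h.trans h'.symm).isInducing using 1
    exact funext fun x => (e.symm_apply_apply _).symm
  exact ⟨hind.eq_induced.trans (@induced_id P (scott P univ))⟩

variable [IsScott P univ] {A : Set P} {x : P}

theorem exists_le_maximal_of_isClosed (hP : IsDcpo P) (hA : IsClosed A) (hx : x ∈ A) :
    ∃ y, x ≤ y ∧ Maximal (· ∈ A) y := by
  refine zorn_le_nonempty₀ A (fun c hcA hc y hy => ?_) x hx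
  obtain ⟨a, ha⟩ := hP c ⟨y, hy⟩ hc.directedOn
  exact ⟨a, IsScott.dirSupClosed_of_isClosed hA hcA ⟨y, hy⟩ hc.directedOn ha, ha.1⟩

theorem isClosed_sdiff_singleton_of_maximal {P : Type*} [PartialOrder P] [TopologicalSpace P]
    [IsScott P univ] {A : Set P} {x : P} (hA : IsClosed A) (hmax : Maximal (· ∈ A) x)
    (hx : ∀ D : Set P, D.Nonempty → DirectedOn (· ≤ ·) D → IsLUB D x → x ∈ D) :
    IsClosed (A \ {x}) := by
  rw [IsScott.isClosed_iff_isLowerSet_and_dirSupClosed] at hA ⊢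
  refine ⟨fun y z hzy hy => ⟨hA.1 hzy hy.1, ?_⟩, fun D hDA hne hdir a ha => ⟨?_, ?_⟩⟩
  · rintro rfl
    exact hy.2 (hmax.eq_of_ge hy.1 hzy)
  · exact hA.2 (hDA.trans sdiff_subset) hne hdir ha
  · rintro rfl
    exact (hDA (hx D hne hdir ha)).2 rfl

end Scott

namespace Sobrification

open Topology

variable {X : Type*} [Preorder X] [TopologicalSpace X] [IsScott X univ]

theorem of_le_of_iff {x y : X} : of x ≤ of y ↔ x ≤ y := by
  change closure {x} ⊆ closure {y} ↔ x ≤ y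
  rw [IsScott.closure_singleton, IsScott.closure_singleton, Iic_subset_Iic]

variable [NoTopOrder X] [IrreducibleSpace X]

theorem of_ne_top (x : X) : of x ≠ ⊤ := by
  intro h
  obtain ⟨y, hy⟩ := exists_not_le x
  exact hy (of_le_of_iff.1 (h ▸ le_top))

theorem top_mem_of_isLUB (hX : IsDcpo X)
    (hirr : ∀ A : Set X, IrredClosed A → A = univ ∨ ∃ x, A = closure {x})
    {D : Set (Sobrification X)} (hne : D.Nonempty) (hdir : DirectedOn (· ≤ ·) D)
    (hlub : IsLUB D ⊤) : ⊤ ∈ D := by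
  by_contra htop
  have hrange : D ⊆ range of := by
    intro A hA
    rcases hirr A A.2 with h | ⟨x, h⟩
    · exact absurd hA ((Subtype.ext h : A = ⊤) ▸ htop)
    · exact ⟨x, Subtype.ext h.symm⟩
  obtain ⟨E, rfl⟩ := subset_range_iff_exists_image_eq.1 hrange
  have hE : DirectedOn (· ≤ ·) E := (directedOn_image.1 hdir).mono fun _ _ => of_le_of_iff.1
  obtain ⟨x, hx⟩ := hX E (image_nonempty.1 hne) hE
  exact of_ne_top x (top_le_iff.1 (hlub.2 (forall_mem_image.2 fun y hy =>
    of_le_of_iff.2 (hx.1 hy))))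

theorem not_isScott (hX : IsDcpo X)
    (hirr : ∀ A : Set X, IrredClosed A → A = univ ∨ ∃ x, A = closure {x}) :
    ¬ IsScott (Sobrification X) univ := by
  intro hScott
  have hopen : IsOpen ({⊤} : Set (Sobrification X)) := by
    rw [IsScott.isOpen_iff_isUpperSet_and_dirSupInaccOn (D := univ), dirSupInaccOn_univ]
    refine ⟨fun A B hAB hA => top_le_iff.1 (hA ▸ hAB), ?_⟩
    rintro D hne hdir _ hlub rfl
    exact ⟨⊤, top_mem_of_isLUB hX hirr hne hdir hlub, rfl⟩
  obtain ⟨x, hx⟩ := denseRange_of.exists_mem_open hopen (singleton_nonempty ⊤)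
  exact of_ne_top x hx

end Sobrification

namespace Johnstone

open Filter Topology

instance : TopologicalSpace Johnstone :=
  scottTop Johnstone

instance : IsScott Johnstone univ :=
  isScott_scottTop Johnstone

theorem le_iff_of_snd_ne_top {p q : Johnstone} (hq : q.snd ≠ ⊤) :
    p ≤ q ↔ p.fst = q.fst ∧ p.snd ≤ q.snd :=
  or_iff_left fun h => hq h.1

theorem le_mk_fst_top (p : Johnstone) : p ≤ ⟨p.fst, ⊤⟩ :=
  Or.inl ⟨rfl, le_top⟩

theorem isMax_of_snd_eq_top {p : Johnstone} (hp : p.snd = ⊤) : IsMax p := by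
  rintro q (⟨hfst, -⟩ | ⟨-, hsnd⟩)
  · exact Or.inl ⟨hfst.symm, hp ▸ le_top⟩
  · exact absurd (top_le_iff.1 (hp ▸ hsnd)) WithTop.coe_ne_top

instance : NoTopOrder Johnstone where
  exists_not_le p :=
    ⟨⟨p.fst + 1, ⊤⟩, fun h => Nat.succ_ne_self p.fst
      (congrArg fst (h.antisymm (isMax_of_snd_eq_top rfl h)))⟩

/-- The points of finite height in the `m`-th column of the Johnstone poset. -/
def column (m n : ℕ) : Johnstone :=
  ⟨m, n⟩

theorem column_monotone (m : ℕ) : Monotone (column m) := fun _ _ h =>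
  Or.inl ⟨rfl, Nat.cast_le.2 h⟩

theorem column_le_mk_top (m : ℕ) {k n : ℕ} (h : k ≤ n) : column m k ≤ ⟨n, ⊤⟩ :=
  Or.inr ⟨rfl, Nat.cast_le.2 h⟩

theorem isLUB_image_column {m : ℕ} {N : Set ℕ} (hN : ¬ BddAbove N) :
    IsLUB (column m '' N) ⟨m, ⊤⟩ := by
  refine ⟨forall_mem_image.2 fun n _ => le_mk_fst_top _, fun ⟨j, k⟩ hb => ?_⟩
  have hle : ∀ n ∈ N, column m n ≤ ⟨j, k⟩ := forall_mem_image.1 hb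
  obtain rfl : k = ⊤ := by
    by_contra hk
    lift k to ℕ using hk
    exact hN ⟨k, fun n hn =>
      Nat.cast_le.1 ((le_iff_of_snd_ne_top WithTop.coe_ne_top).1 (hle n hn)).2⟩
  obtain ⟨n, hn, hjn⟩ := not_bddAbove_iff.1 hN j
  rcases hle n hn with ⟨hmj, -⟩ | ⟨-, hnj⟩
  · exact Or.inl ⟨hmj, le_rfl⟩
  · exact absurd (Nat.cast_le.1 hnj) hjn.not_ge

theorem exists_eq_image_column {D : Set Johnstone} (hne : D.Nonempty)
    (hdir : DirectedOn (· ≤ ·) D) (hD : ∀ p ∈ D, p.snd ≠ ⊤) :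
    ∃ m, ∃ N : Set ℕ, N.Nonempty ∧ D = column m '' N := by
  obtain ⟨e, he⟩ := hne
  have hcol : ∀ p ∈ D, ∃ n, column e.fst n = p := by
    intro p hp
    obtain ⟨w, hw, hpw, hew⟩ := hdir p hp e he
    have hfst : p.fst = e.fst := ((le_iff_of_snd_ne_top (hD w hw)).1 hpw).1.trans
      ((le_iff_of_snd_ne_top (hD w hw)).1 hew).1.symm
    obtain ⟨n, hn⟩ := WithTop.ne_top_iff_exists.1 (hD p hp)
    exact ⟨n, congrArg₂ mk hfst.symm hn⟩
  have hDcol : D = column e.fst '' (column e.fst ⁻¹' D) :=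
    (image_preimage_eq_of_subset hcol).symm
  exact ⟨e.fst, _, (hcol e he).imp fun n hn => mem_preimage.2 (hn ▸ he), hDcol⟩

theorem exists_isGreatest_or_isLUB {D : Set Johnstone} (hne : D.Nonempty)
    (hdir : DirectedOn (· ≤ ·) D) : (∃ p, IsGreatest D p) ∨ ∃ m, IsLUB D ⟨m, ⊤⟩ := by
  by_cases htop : ∃ p ∈ D, p.snd = ⊤
  · obtain ⟨p, hp, hptop⟩ := htop
    exact Or.inl ⟨p, hp, hdir.is_top_of_is_max hp fun q _ hpq => isMax_of_snd_eq_top hptop hpq⟩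
  · push Not at htop
    obtain ⟨m, N, hN, rfl⟩ := exists_eq_image_column hne hdir htop
    by_cases hbdd : BddAbove N
    · exact Or.inl ⟨_, (column_monotone m).map_isGreatest
        ⟨Nat.sSup_mem hN hbdd, fun _ => le_csSup hbdd⟩⟩
    · exact Or.inr ⟨m, isLUB_image_column hbdd⟩

theorem isDcpo : IsDcpo Johnstone := fun _ hne hdir =>
  (exists_isGreatest_or_isLUB hne hdir).elim (fun ⟨p, hp⟩ => ⟨p, hp.isLUB⟩) fun ⟨_, hm⟩ => ⟨_, hm⟩

theorem mem_of_isLUB_of_snd_ne_top {D : Set Johnstone} (hne : D.Nonempty)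
    (hdir : DirectedOn (· ≤ ·) D) {p : Johnstone} (hp : IsLUB D p) (hptop : p.snd ≠ ⊤) :
    p ∈ D := by
  rcases exists_isGreatest_or_isLUB hne hdir with ⟨q, hq⟩ | ⟨m, hm⟩
  · exact hp.unique hq.isLUB ▸ hq.1
  · exact absurd (congrArg snd (hp.unique hm)) hptop

theorem tendsto_mk_top (p : Johnstone) :
    Tendsto (fun n => (⟨n, ⊤⟩ : Johnstone)) atTop (𝓝 p) := by
  refine tendsto_atTop_nhds.2 fun U hpU hU => ?_
  obtain ⟨hup, hacc⟩ := hU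
  have htop : ⟨p.fst, ⊤⟩ ∈ U := hup (le_mk_fst_top p) hpU
  obtain ⟨_, ⟨k, -, rfl⟩, hk⟩ := hacc (column p.fst '' univ) (univ_nonempty.image _)
    (directedOn_image.2 (directedOn_univ.mono @(column_monotone p.fst))) _
    (isLUB_image_column not_bddAbove_univ) htop
  exact ⟨k, fun n hkn => hup (column_le_mk_top p.fst hkn) hk⟩

instance : IrreducibleSpace Johnstone where
  toNonempty := ⟨⟨0, 0⟩⟩
  isPreirreducible_univ := by
    rintro U V hU hV ⟨p, -, hp⟩ ⟨q, -, hq⟩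
    obtain ⟨n, hnU, hnV⟩ := (((tendsto_mk_top p).eventually (hU.mem_nhds hp)).and
      ((tendsto_mk_top q).eventually (hV.mem_nhds hq))).exists
    exact ⟨_, mem_univ _, hnU, hnV⟩

theorem finite_setOf_mk_top_mem {A : Set Johnstone} (hA : IsClosed A) (hne : A ≠ univ) :
    {n : ℕ | (⟨n, ⊤⟩ : Johnstone) ∈ A}.Finite := by
  obtain ⟨p, hp⟩ := (ne_univ_iff_exists_notMem A).1 hne
  have h := (tendsto_mk_top p).eventually (hA.isOpen_compl.mem_nhds hp)
  rw [← Nat.cofinite_eq_atTop, eventually_cofinite] at h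
  simpa using h

theorem eq_univ_or_exists_eq_closure_singleton {A : Set Johnstone} (hA : IrredClosed A) :
    A = univ ∨ ∃ p, A = closure {p} := by
  refine or_iff_not_imp_left.2 fun hne => ?_
  by_cases hfin : ∃ p, Maximal (· ∈ A) p ∧ p.snd ≠ ⊤
  · obtain ⟨p, hmax, hp⟩ := hfin
    exact ⟨p, hA.eq_closure_singleton hmax.prop (isClosed_sdiff_singleton_of_maximal hA.2.1 hmax
      fun D hD hdir hlub => mem_of_isLUB_of_snd_ne_top hD hdir hlub hp)⟩
  · push Not at hfin
    have hF := (finite_setOf_mk_top_mem hA.2.1 hne).image fun n => (⟨n, ⊤⟩ : Johnstone)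
    refine hA.exists_eq_closure_singleton hF (image_subset_iff.2 fun n hn => hn) fun p hp => ?_
    obtain ⟨⟨n, k⟩, hpq, hmax⟩ := exists_le_maximal_of_isClosed isDcpo hA.2.1 hp
    obtain rfl : k = ⊤ := hfin _ hmax
    refine mem_biUnion (mem_image_of_mem _ hmax.prop) ?_
    rwa [IsScott.closure_singleton]

theorem isKSet_wfClass {A : Set Johnstone} (hA : IrredClosed A) : IsKSet wfClass Johnstone A := by
  rcases eq_univ_or_exists_eq_closure_singleton hA with rfl | ⟨p, rfl⟩
  · exact isKSet_wfClass_of_tendsto (fun _ => mem_univ _) fun p _ => tendsto_mk_top p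
  · exact isKSet_closure_singleton (fun _ _ hY => hY.1) p

theorem isKReflection_wfClass_sobrification :
    IsKReflection wfClass Johnstone (scottTop Johnstone) (Sobrification Johnstone) inferInstance
      Sobrification.of :=
  Sobrification.isKReflection_of (fun _ _ hY => hY.1) wellFiltered_of_quasiSober
    fun _ => isKSet_wfClass

theorem isEmpty_homeomorph_sobrification (Q : Type v) [Preorder Q] [TopologicalSpace Q]
    [IsScott Q univ] : IsEmpty (Sobrification Johnstone ≃ₜ Q) :=
  ⟨fun h => Sobrification.not_isScott isDcpo (fun _ => eq_univ_or_exists_eq_closure_singleton)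
    (isScott_of_homeomorph Sobrification.closure_singleton h)⟩

end Johnstone

/-- Neither the sobrification nor the well-filtered reflection of the
Johnstone space `Σ 𝕁` is a Scott space. -/
theorem stmt17 :
    (¬ ∃ (Q : Type v) (pQ : PartialOrder Q),
        Nonempty (@Homeomorph ↥{A : Set Johnstone | @IrredClosed Johnstone (scottTop Johnstone) A} Q
          (@lowerVietoris Johnstone (scottTop Johnstone)
            {A : Set Johnstone | @IrredClosed Johnstone (scottTop Johnstone) A})
          (@scottTop Q pQ.toPreorder))) ∧
    (¬ ∃ (Q : Type) (pQ : PartialOrder Q) (μ : Johnstone → Q),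
        IsKReflection wfClass Johnstone (scottTop Johnstone) Q
          (@scottTop Q pQ.toPreorder) μ) := by
  constructor
  · rintro ⟨Q, pQ, ⟨h⟩⟩
    let := scottTop Q
    have := isScott_scottTop Q
    exact (Johnstone.isEmpty_homeomorph_sobrification Q).false h
  · rintro ⟨Q, pQ, μ, hμ⟩
    let := scottTop Q
    have := isScott_scottTop Q
    obtain ⟨h⟩ := Johnstone.isKReflection_wfClass_sobrification.nonempty_homeomorph hμ
    exact (Johnstone.isEmpty_homeomorph_sobrification Q).false h
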